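/- Let δ>0, let 0<s<r<1 and let b>0. Then b^{1−δ} · (1−r)^{−δ/2} exp(−b²/(2(1−r))) · ∫₀^∞ a · p^δ_s(0,a) · p^δ_{r−s}(a,b) da = Σ^δ_{r,s}(b), i.e. the integral expression on the left equals (2^{δ/2−1}(r(1−r))^{δ/2})^{−1} exp(−D(s,r)b²/2) ∑_{k=0}^∞ C_k f_k(s,r) b^{2k} with D(s,r) = (1−s)/((r−s)(1−r)), C_k = Γ(k+(δ+1)/2)/(Γ(δ/2)Γ(k+δ/2)k!) and f_k(s,r) = (2(r−s))^{1/2−k}(s/r)^{k+1/2}. -/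

import Mathlib

open MeasureTheory Real Filter

/-- Ascending Pochhammer symbol `(a)_k = a(a+1)⋯(a+k-1)`. -/
noncomputable def poch (a : ℝ) (k : ℕ) : ℝ := ∏ i ∈ Finset.range k, (a + i)

/-- Gauss hypergeometric function `₂F₁(a,b,c,z) = ∑ (a)_k (b)_k / (k! (c)_k) z^k`. -/
noncomputable def hyp2F1 (a b c z : ℝ) : ℝ :=
  ∑' k : ℕ, (poch a k * poch b k) / ((Nat.factorial k : ℝ) * poch c k) * z ^ k

/-- `K(δ) = 2 Γ((δ+1)/2)² / Γ(δ/2)²`. -/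
noncomputable def Kcoef (δ : ℝ) : ℝ :=
  2 * Real.Gamma ((δ + 1) / 2) ^ 2 / Real.Gamma (δ / 2) ^ 2

/-- Two-point kernel `G_δ(s,r)`, equal to the second moment `E^δ[X_s X_r]` of a
δ-dimensional Bessel bridge from 0 to 0 over [0,1]. -/
noncomputable def twoPt (δ s r : ℝ) : ℝ :=
  if s < r then
    Kcoef δ * (r - s) ^ (δ / 2 + 1) * (s * (1 - r)) ^ ((1 : ℝ) / 2) *
      (r * (1 - s)) ^ (-((δ + 1) / 2)) *
      hyp2F1 ((δ + 1) / 2) ((δ + 1) / 2) (δ / 2) (s * (1 - r) / (r * (1 - s)))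
  else
    Kcoef δ * (s - r) ^ (δ / 2 + 1) * (r * (1 - s)) ^ ((1 : ℝ) / 2) *
      (s * (1 - r)) ^ (-((δ + 1) / 2)) *
      hyp2F1 ((δ + 1) / 2) ((δ + 1) / 2) (δ / 2) (r * (1 - s) / (s * (1 - r)))

/-- Coefficient `D(s,r)`. -/
noncomputable def Dcoef (s r : ℝ) : ℝ :=
  if s < r then (1 - s) / ((r - s) * (1 - r)) else s / (r * (s - r))

/-- Coefficient `C_k = Γ(k+(δ+1)/2)/(Γ(δ/2) Γ(k+δ/2) k!)`. -/
noncomputable def Ccoef (δ : ℝ) (k : ℕ) : ℝ :=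
  Real.Gamma ((k : ℝ) + (δ + 1) / 2) /
    (Real.Gamma (δ / 2) * Real.Gamma ((k : ℝ) + δ / 2) * (Nat.factorial k : ℝ))

/-- Coefficient `f_k(s,r)`. -/
noncomputable def fcoef (s r : ℝ) (k : ℕ) : ℝ :=
  if s < r then (2 * (r - s)) ^ ((1 : ℝ) / 2 - (k : ℝ)) * (s / r) ^ ((k : ℝ) + 1 / 2)
  else (2 * (s - r)) ^ ((1 : ℝ) / 2 - (k : ℝ)) * ((1 - s) / (1 - r)) ^ ((k : ℝ) + 1 / 2)

/-- `Σ^δ_{r,s}(b) = Σ^δ_r(X_s | b)`, the density-weighted conditional expectation of a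
δ-dimensional Bessel bridge. -/
noncomputable def SigmaRS (δ r s b : ℝ) : ℝ :=
  ((2 : ℝ) ^ (δ / 2 - 1) * (r * (1 - r)) ^ (δ / 2))⁻¹ *
    Real.exp (-(Dcoef s r) * b ^ 2 / 2) *
    ∑' k : ℕ, Ccoef δ k * fcoef s r k * b ^ (2 * k)

/-- Transition density of the δ-dimensional Bessel process started at 0:
`p^δ_t(0,a) = a^{δ-1}/(2^{δ/2-1} t^{δ/2} Γ(δ/2)) exp(-a²/(2t))`. -/
noncomputable def pFrom0 (δ t a : ℝ) : ℝ :=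
  a ^ (δ - 1) / ((2 : ℝ) ^ (δ / 2 - 1) * t ^ (δ / 2) * Real.Gamma (δ / 2)) *
    Real.exp (-a ^ 2 / (2 * t))

/-- Transition density of the δ-dimensional Bessel process:
`p^δ_t(a,b) = (b/t)(b/a)^{δ/2-1} exp(-(a²+b²)/(2t)) ∑ (ab/(2t))^{2k+δ/2-1}/(k! Γ(k+δ/2))`. -/
noncomputable def pTrans (δ t a b : ℝ) : ℝ :=
  (b / t) * (b / a) ^ (δ / 2 - 1) * Real.exp (-(a ^ 2 + b ^ 2) / (2 * t)) *
    ∑' k : ℕ, (a * b / (2 * t)) ^ (2 * (k : ℝ) + δ / 2 - 1) /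
      ((Nat.factorial k : ℝ) * Real.Gamma ((k : ℝ) + δ / 2))

/-!
A `δ`-dimensional Bessel process from `0` that is at `b` at time `s + t` has, at time `s`, the
unnormalised density `a ↦ p_s(0, a) p_t(a, b)`. This is a Gaussian in `a` of precision
`(s + t) / (s t)` times a power of `a` times the power series of a modified Bessel function, so
every moment of it can be integrated term by term against Gaussian moments. The Gamma functions so
produced turn the Bessel series into a confluent hypergeometric one, with argument
`z = s b² / (2 t (s + t))`; splitting the exponential as
`exp (-b² / (2t)) = exp (-b² / (2(s + t))) exp (-z)` makes `p_{s+t}(0, b)` a factor of the result.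
The claim is the first moment with `t = r - s`, after multiplication by the factor that conditions
the process to return to `0` at time `1`.
-/

open scoped Nat Topology

/-- Coefficients of Kummer's confluent hypergeometric function `M(α, β, ·)`, normalised by Gamma
functions in place of Pochhammer symbols. -/
noncomputable def kummerCoeff (α β : ℝ) (k : ℕ) : ℝ :=
  Gamma (k + α) / (Gamma (k + β) * k !)

/-- The confluent hypergeometric function in the normalisation `Γ(α) / Γ(β) * M(α, β, z)`. -/
noncomputable def gammaKummer (α β z : ℝ) : ℝ := ∑' k : ℕ, kummerCoeff α β k * z ^ k

/-- The moment `E[X_s ^ q | X_{s+t} = b]` of a `δ`-dimensional Bessel process `X` started at `0`,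
in closed form; `integral_rpow_mul_pFrom0_mul_pTrans` identifies it with the integral. -/
noncomputable def besselCondMoment (δ q s t b : ℝ) : ℝ :=
  (2 * s * t / (s + t)) ^ (q / 2) * exp (-(s * b ^ 2 / (2 * t * (s + t)))) *
    gammaKummer ((δ + q) / 2) (δ / 2) (s * b ^ 2 / (2 * t * (s + t)))

lemma kummerCoeff_succ {α β : ℝ} {k : ℕ} (hα : k + α ≠ 0) (hβ : k + β ≠ 0) :
    kummerCoeff α β (k + 1) = (α + k) / (β + k) / (k + 1) * kummerCoeff α β k := by
  have Gamma_succ {γ : ℝ} (hγ : k + γ ≠ 0) :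
      Gamma (k + 1 + γ) = (γ + k) * Gamma (k + γ) := by
    rw [add_comm γ, ← Gamma_add_one hγ, add_right_comm]
  simp only [kummerCoeff, Nat.factorial_succ, Nat.cast_mul, Nat.cast_succ, Gamma_succ hα,
    Gamma_succ hβ, div_eq_mul_inv, mul_inv]
  ring

lemma summable_kummerCoeff_mul_pow (α β z : ℝ) :
    Summable fun k : ℕ ↦ kummerCoeff α β k * z ^ k := by
  have tendsto_ratio :
      Tendsto (fun k : ℕ ↦ (α + k) / (β + k) * (z / (k + 1))) atTop (𝓝 0) := by
    have h₁ : Tendsto (fun k : ℕ ↦ (α + k) / (β + k)) atTop (𝓝 1) := by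
      simpa only [one_mul, div_one] using
        tendsto_add_mul_div_add_mul_atTop_nhds α β 1 (one_ne_zero (α := ℝ))
    have h₂ : Tendsto (fun k : ℕ ↦ z / ((k : ℝ) + 1)) atTop (𝓝 0) :=
      (tendsto_natCast_atTop_atTop.atTop_add tendsto_const_nhds).const_div_atTop z
    simpa only [one_mul] using h₁.mul h₂
  have eventually_ne (γ : ℝ) : ∀ᶠ k : ℕ in atTop, k + γ ≠ 0 :=
    (tendsto_natCast_atTop_atTop.atTop_add tendsto_const_nhds).eventually_ne_atTop 0
  refine summable_of_ratio_norm_eventually_le (r := 1 / 2) (by norm_num) ?_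
  filter_upwards [eventually_ne α, eventually_ne β,
    tendsto_ratio.norm.eventually_le_const (by norm_num : ‖(0 : ℝ)‖ < 1 / 2)] with k hα hβ hk
  have ratio : kummerCoeff α β (k + 1) * z ^ (k + 1) =
      (α + k) / (β + k) * (z / (k + 1)) * (kummerCoeff α β k * z ^ k) := by
    rw [kummerCoeff_succ hα hβ]
    ring
  rw [ratio, norm_mul]
  exact mul_le_mul_of_nonneg_right hk (norm_nonneg _)

section GaussianMoments

variable {μ p : ℝ}

lemma rpow_mul_exp_neg_mul_sq_mul_pow (k : ℕ) {x : ℝ} (hx : 0 < x) :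
    x ^ μ * exp (-p * x ^ 2) * x ^ (2 * k) = x ^ (μ + 2 * k) * exp (-p * x ^ 2) := by
  rw [rpow_add hx, mul_right_comm]
  norm_cast

lemma integrableOn_rpow_mul_exp_neg_mul_sq_mul_pow (hμ : -1 < μ) (hp : 0 < p) (k : ℕ) :
    IntegrableOn (fun x : ℝ ↦ x ^ μ * exp (-p * x ^ 2) * x ^ (2 * k)) (Set.Ioi 0) :=
  (integrableOn_rpow_mul_exp_neg_mul_sq hp
    (by linarith [k.cast_nonneg (α := ℝ)] : -1 < μ + 2 * k)).congr_fun
    (fun _ hx ↦ (rpow_mul_exp_neg_mul_sq_mul_pow k hx).symm) measurableSet_Ioi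

lemma integral_rpow_mul_exp_neg_mul_sq_mul_pow (hμ : -1 < μ) (hp : 0 < p) (k : ℕ) :
    ∫ x in Set.Ioi (0 : ℝ), x ^ μ * exp (-p * x ^ 2) * x ^ (2 * k) =
      p ^ (-((μ + 1) / 2)) / 2 * (Gamma (k + (μ + 1) / 2) * p⁻¹ ^ k) := by
  have hpow : p ^ (-(μ + 2 * k + 1) / 2) = p ^ (-((μ + 1) / 2)) * p⁻¹ ^ k := by
    rw [show -(μ + 2 * k + 1) / 2 = -((μ + 1) / 2) - k by ring, rpow_sub_natCast hp.ne', inv_pow,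
      div_eq_mul_inv]
  calc ∫ x in Set.Ioi (0 : ℝ), x ^ μ * exp (-p * x ^ 2) * x ^ (2 * k)
      = ∫ x in Set.Ioi (0 : ℝ), x ^ (μ + 2 * k) * exp (-p * x ^ (2 : ℝ)) :=
        setIntegral_congr_fun measurableSet_Ioi fun x hx ↦ by
          simp only [rpow_mul_exp_neg_mul_sq_mul_pow k hx, rpow_two]
    _ = p ^ (-(μ + 2 * k + 1) / 2) * (1 / 2) * Gamma ((μ + 2 * k + 1) / 2) :=
        integral_rpow_mul_exp_neg_mul_rpow two_pos (by linarith [k.cast_nonneg (α := ℝ)]) hp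
    _ = p ^ (-((μ + 1) / 2)) / 2 * (Gamma (k + (μ + 1) / 2) * p⁻¹ ^ k) := by
        rw [hpow, show (μ + 2 * k + 1) / 2 = k + (μ + 1) / 2 by ring]
        ring

lemma integral_rpow_mul_exp_neg_mul_sq_mul_tsum (hμ : -1 < μ) (hp : 0 < p) {c : ℕ → ℝ}
    (hc : Summable fun k ↦ |c k| * (Gamma (k + (μ + 1) / 2) * p⁻¹ ^ k)) :
    ∫ x in Set.Ioi (0 : ℝ), x ^ μ * exp (-p * x ^ 2) * ∑' k, c k * x ^ (2 * k) =
      p ^ (-((μ + 1) / 2)) / 2 * ∑' k, c k * (Gamma (k + (μ + 1) / 2) * p⁻¹ ^ k) := by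
  set w : ℕ → ℝ → ℝ := fun k x ↦ x ^ μ * exp (-p * x ^ 2) * x ^ (2 * k)
  have integral_w (k : ℕ) : ∫ x in Set.Ioi (0 : ℝ), w k x =
      p ^ (-((μ + 1) / 2)) / 2 * (Gamma (k + (μ + 1) / 2) * p⁻¹ ^ k) :=
    integral_rpow_mul_exp_neg_mul_sq_mul_pow hμ hp k
  have integrable_term (k : ℕ) : IntegrableOn (fun x ↦ c k * w k x) (Set.Ioi 0) :=
    (integrableOn_rpow_mul_exp_neg_mul_sq_mul_pow hμ hp k).const_mul (c k)
  have integral_norm_term (k : ℕ) : ∫ x in Set.Ioi (0 : ℝ), ‖c k * w k x‖ =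
      p ^ (-((μ + 1) / 2)) / 2 * (|c k| * (Gamma (k + (μ + 1) / 2) * p⁻¹ ^ k)) := by
    rw [mul_left_comm, ← integral_w, ← integral_const_mul]
    refine setIntegral_congr_fun measurableSet_Ioi fun x (hx : 0 < x) ↦ ?_
    have w_pos : 0 < w k x := by positivity
    simp only [norm_mul, norm_eq_abs, abs_of_pos w_pos]
  calc ∫ x in Set.Ioi (0 : ℝ), x ^ μ * exp (-p * x ^ 2) * ∑' k, c k * x ^ (2 * k)
      = ∫ x in Set.Ioi (0 : ℝ), ∑' k, c k * w k x := by
        simp only [← tsum_mul_left, mul_left_comm (c _), w]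
    _ = ∑' k, ∫ x in Set.Ioi (0 : ℝ), c k * w k x := by
        refine (integral_tsum_of_summable_integral_norm integrable_term ?_).symm
        simpa only [integral_norm_term] using hc.mul_left _
    _ = p ^ (-((μ + 1) / 2)) / 2 * ∑' k, c k * (Gamma (k + (μ + 1) / 2) * p⁻¹ ^ k) := by
        simp only [integral_const_mul, integral_w, ← tsum_mul_left, mul_left_comm (c _)]

end GaussianMoments

lemma pFrom0_eq (δ : ℝ) {t : ℝ} (ht : 0 ≤ t) (a : ℝ) :
    pFrom0 δ t a =
      2 * a ^ (δ - 1) / ((2 * t) ^ (δ / 2) * Gamma (δ / 2)) * exp (-a ^ 2 / (2 * t)) := by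
  rw [pFrom0, rpow_sub_one two_ne_zero, mul_rpow zero_le_two ht]
  field_simp

lemma div_mul_rpow_mul_rpow_eq (ν : ℝ) {t a b : ℝ} (ht : 0 < t) (ha : 0 < a) (hb : 0 < b) :
    b / t * (b / a) ^ (ν - 1) * (a * b / (2 * t)) ^ (ν - 1) =
      2 * b ^ (2 * ν - 1) / (2 * t) ^ ν := by
  have merge : (b / a) ^ (ν - 1) * (a * b / (2 * t)) ^ (ν - 1) =
      (b ^ (2 : ℝ)) ^ (ν - 1) / (2 * t) ^ (ν - 1) := by
    rw [← mul_rpow (by positivity) (by positivity), ← div_rpow (by positivity) (by positivity),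
      rpow_two]
    field_simp
  rw [mul_assoc, merge, ← rpow_mul hb.le, rpow_sub_one (by positivity : 2 * t ≠ 0),
    show 2 * ν - 1 = 2 * (ν - 1) + 1 by ring, rpow_add_one hb.ne']
  field_simp

lemma pTrans_eq (δ : ℝ) {t a b : ℝ} (ht : 0 < t) (ha : 0 < a) (hb : 0 < b) :
    pTrans δ t a b = 2 * b ^ (δ - 1) / (2 * t) ^ (δ / 2) * exp (-(a ^ 2 + b ^ 2) / (2 * t)) *
      ∑' k : ℕ, (b / (2 * t)) ^ (2 * k) / (k ! * Gamma (k + δ / 2)) * a ^ (2 * k) := by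
  have term (k : ℕ) :
      (a * b / (2 * t)) ^ (2 * (k : ℝ) + δ / 2 - 1) / (k ! * Gamma (k + δ / 2)) =
        (a * b / (2 * t)) ^ (δ / 2 - 1) *
          ((b / (2 * t)) ^ (2 * k) / (k ! * Gamma (k + δ / 2)) * a ^ (2 * k)) := by
    have split : (a * b / (2 * t)) ^ (2 * (k : ℝ) + δ / 2 - 1) =
        (a * b / (2 * t)) ^ (δ / 2 - 1) * ((b / (2 * t)) ^ (2 * k) * a ^ (2 * k)) := by
      rw [← mul_pow, ← rpow_natCast, show b / (2 * t) * a = a * b / (2 * t) by ring,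
        ← rpow_add (by positivity)]
      push_cast
      ring_nf
    rw [split]
    ring
  have prefactor := div_mul_rpow_mul_rpow_eq (δ / 2) ht ha hb
  rw [mul_div_cancel₀ δ two_ne_zero] at prefactor
  simp only [pTrans, term, tsum_mul_left, ← prefactor]
  ring

section Moments

variable {δ q s t b : ℝ}

lemma rpow_mul_pFrom0_mul_pTrans (hs : 0 < s) (ht : 0 < t) (hb : 0 < b) {a : ℝ} (ha : 0 < a) :
    a ^ q * (pFrom0 δ s a * pTrans δ t a b) =
      4 * b ^ (δ - 1) / ((2 * s) ^ (δ / 2) * (2 * t) ^ (δ / 2) * Gamma (δ / 2)) *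
          exp (-b ^ 2 / (2 * t)) *
        (a ^ (δ - 1 + q) * exp (-((s + t) / (2 * s * t)) * a ^ 2) *
          ∑' k : ℕ, (b / (2 * t)) ^ (2 * k) / (k ! * Gamma (k + δ / 2)) * a ^ (2 * k)) := by
  have exponents : exp (-a ^ 2 / (2 * s)) * exp (-(a ^ 2 + b ^ 2) / (2 * t)) =
      exp (-b ^ 2 / (2 * t)) * exp (-((s + t) / (2 * s * t)) * a ^ 2) := by
    rw [← exp_add, ← exp_add]
    congr 1
    field_simp
    ring
  rw [pFrom0_eq δ hs.le, pTrans_eq δ ht ha hb, rpow_add ha]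
  linear_combination (a ^ q * (2 * a ^ (δ - 1) / ((2 * s) ^ (δ / 2) * Gamma (δ / 2))) *
    (2 * b ^ (δ - 1) / (2 * t) ^ (δ / 2)) *
    ∑' k : ℕ, (b / (2 * t)) ^ (2 * k) / (k ! * Gamma (k + δ / 2)) * a ^ (2 * k)) * exponents

lemma besselSeries_coeff_mul_gaussianMoment (hs : 0 < s) (ht : 0 < t) (k : ℕ) :
    (b / (2 * t)) ^ (2 * k) / (k ! * Gamma (k + δ / 2)) *
        (Gamma (k + (δ + q) / 2) * ((s + t) / (2 * s * t))⁻¹ ^ k) =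
      kummerCoeff ((δ + q) / 2) (δ / 2) k * (s * b ^ 2 / (2 * t * (s + t))) ^ k := by
  have argument : s * b ^ 2 / (2 * t * (s + t)) =
      (b / (2 * t)) ^ 2 * ((s + t) / (2 * s * t))⁻¹ := by
    field_simp
  rw [argument, mul_pow, pow_mul, kummerCoeff]
  ring

lemma precision_rpow (hs : 0 < s) (ht : 0 < t) :
    ((s + t) / (2 * s * t)) ^ (-((δ + q) / 2)) =
      (2 * s) ^ (δ / 2) * (2 * t) ^ (δ / 2) / (2 * (s + t)) ^ (δ / 2) *
        (2 * s * t / (s + t)) ^ (q / 2) := by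
  rw [rpow_neg (by positivity), ← inv_rpow (by positivity), inv_div, add_div,
    rpow_add (by positivity), ← mul_rpow (by positivity) (by positivity),
    ← div_rpow (by positivity) (by positivity)]
  congr 2
  field_simp

theorem integral_rpow_mul_pFrom0_mul_pTrans (hδq : 0 < δ + q) (hs : 0 < s) (ht : 0 < t)
    (hb : 0 < b) :
    ∫ a in Set.Ioi (0 : ℝ), a ^ q * (pFrom0 δ s a * pTrans δ t a b) =
      pFrom0 δ (s + t) b * besselCondMoment δ q s t b := by
  have coeff (k : ℕ) := besselSeries_coeff_mul_gaussianMoment (δ := δ) (q := q) (b := b) hs ht k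
  have exponent : (δ - 1 + q + 1) / 2 = (δ + q) / 2 := by ring
  have summable_abs : Summable fun k : ℕ ↦ |(b / (2 * t)) ^ (2 * k) / (k ! * Gamma (k + δ / 2))| *
      (Gamma (k + (δ - 1 + q + 1) / 2) * ((s + t) / (2 * s * t))⁻¹ ^ k) := by
    refine (summable_kummerCoeff_mul_pow ((δ + q) / 2) (δ / 2)
      (s * b ^ 2 / (2 * t * (s + t)))).abs.congr fun k ↦ ?_
    have gaussianMoment_pos :
        0 < Gamma (k + (δ + q) / 2) * ((s + t) / (2 * s * t))⁻¹ ^ k := by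
      have := Gamma_pos_of_pos (by positivity : 0 < k + (δ + q) / 2)
      positivity
    rw [exponent, ← coeff, abs_mul, abs_of_pos gaussianMoment_pos]
  have split_exp : exp (-b ^ 2 / (2 * t)) =
      exp (-b ^ 2 / (2 * (s + t))) * exp (-(s * b ^ 2 / (2 * t * (s + t)))) := by
    rw [← exp_add]
    congr 1
    field_simp
    ring
  rw [setIntegral_congr_fun measurableSet_Ioi fun a ha ↦ rpow_mul_pFrom0_mul_pTrans hs ht hb ha,
    integral_const_mul, integral_rpow_mul_exp_neg_mul_sq_mul_tsum (by linarith) (by positivity)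
      summable_abs, exponent]
  simp only [coeff, precision_rpow hs ht, split_exp, besselCondMoment, gammaKummer,
    pFrom0_eq δ (add_pos hs ht).le]
  field_simp
  ring

end Moments

section Bridge

variable {δ s r b : ℝ}

lemma bridgeFactor_mul_pFrom0 (hr₀ : 0 < r) (hr₁ : r < 1) (hb : 0 < b) :
    b ^ (1 - δ) * (1 - r) ^ (-(δ / 2)) * exp (-b ^ 2 / (2 * (1 - r))) * pFrom0 δ r b =
      ((2 : ℝ) ^ (δ / 2 - 1) * (r * (1 - r)) ^ (δ / 2))⁻¹ * (Gamma (δ / 2))⁻¹ *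
        exp (-(b ^ 2 / (2 * (r * (1 - r))))) := by
  have h1r : 0 < 1 - r := sub_pos.2 hr₁
  have exponents : exp (-b ^ 2 / (2 * (1 - r))) * exp (-b ^ 2 / (2 * r)) =
      exp (-(b ^ 2 / (2 * (r * (1 - r))))) := by
    rw [← exp_add]
    congr 1
    field_simp
    ring
  have powers : b ^ (1 - δ) * b ^ (δ - 1) = 1 := by
    rw [← rpow_add hb, sub_add_sub_cancel, sub_self, rpow_zero]
  rw [pFrom0, ← exponents, mul_rpow hr₀.le h1r.le, rpow_neg h1r.le]
  linear_combination ((1 - r) ^ (δ / 2))⁻¹ * exp (-b ^ 2 / (2 * (1 - r))) *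
    exp (-b ^ 2 / (2 * r)) / ((2 : ℝ) ^ (δ / 2 - 1) * r ^ (δ / 2) * Gamma (δ / 2)) * powers

lemma Ccoef_eq (δ : ℝ) (k : ℕ) :
    Ccoef δ k = (Gamma (δ / 2))⁻¹ * kummerCoeff ((δ + 1) / 2) (δ / 2) k := by
  rw [Ccoef, kummerCoeff]
  ring

lemma fcoef_of_lt (hs : 0 < s) (hsr : s < r) (k : ℕ) :
    fcoef s r k = (2 * s * (r - s) / r) ^ ((1 : ℝ) / 2) * (s / (2 * (r - s) * r)) ^ k := by
  have ht : 0 < r - s := sub_pos.2 hsr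
  have hr : 0 < r := hs.trans hsr
  have base : 2 * s * (r - s) / r = 2 * (r - s) * (s / r) := by ring
  have ratio : s / (2 * (r - s) * r) = s / r / (2 * (r - s)) := by field_simp
  rw [fcoef, if_pos hsr, base, ratio, mul_rpow (x := 2 * (r - s)) (by positivity) (by positivity),
    div_pow, rpow_sub_natCast (by positivity), add_comm (k : ℝ), rpow_add_natCast (by positivity)]
  ring

lemma SigmaRS_of_lt (hs : 0 < s) (hsr : s < r) (hr : r < 1) :
    SigmaRS δ r s b =
      ((2 : ℝ) ^ (δ / 2 - 1) * (r * (1 - r)) ^ (δ / 2))⁻¹ * (Gamma (δ / 2))⁻¹ *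
        exp (-(b ^ 2 / (2 * (r * (1 - r))))) * besselCondMoment δ 1 s (r - s) b := by
  have ht : 0 < r - s := sub_pos.2 hsr
  have h1r : 0 < 1 - r := sub_pos.2 hr
  have hr₀ : 0 < r := hs.trans hsr
  have exponents : exp (-(Dcoef s r) * b ^ 2 / 2) =
      exp (-(b ^ 2 / (2 * (r * (1 - r))))) * exp (-(s * b ^ 2 / (2 * (r - s) * r))) := by
    rw [Dcoef, if_pos hsr, ← exp_add]
    congr 1
    field_simp
    ring
  have term (k : ℕ) : Ccoef δ k * fcoef s r k * b ^ (2 * k) =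
      (Gamma (δ / 2))⁻¹ * (2 * s * (r - s) / r) ^ ((1 : ℝ) / 2) *
        (kummerCoeff ((δ + 1) / 2) (δ / 2) k * (s * b ^ 2 / (2 * (r - s) * r)) ^ k) := by
    rw [Ccoef_eq, fcoef_of_lt hs hsr, mul_div_right_comm s, mul_pow, pow_mul]
    ring
  simp only [SigmaRS, besselCondMoment, gammaKummer, exponents, term, tsum_mul_left,
    add_sub_cancel]
  ring

end Bridge

-- At `δ = 0` the convention `1 / Γ(0) = 0` agrees with the value of the entire function `1 / Γ`.
theorem sigma_eq_integral_of_densities_general (δ : ℝ) (hδ : -1 < δ) (s r : ℝ)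
    (hs : 0 < s) (hsr : s < r) (hr : r < 1) (b : ℝ) (hb : 0 < b) :
    b ^ (1 - δ) * (1 - r) ^ (-(δ / 2)) * Real.exp (-b ^ 2 / (2 * (1 - r))) *
      (∫ a in Set.Ioi (0 : ℝ), a * pFrom0 δ s a * pTrans δ (r - s) a b)
    = SigmaRS δ r s b := by
  have first_moment := integral_rpow_mul_pFrom0_mul_pTrans (q := 1) (by linarith : 0 < δ + 1) hs
    (sub_pos.2 hsr) hb
  simp only [rpow_one, ← mul_assoc, add_sub_cancel] at first_moment
  rw [first_moment, ← mul_assoc, bridgeFactor_mul_pFrom0 (hs.trans hsr) hr hb,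
    ← SigmaRS_of_lt hs hsr hr]

theorem sigma_eq_integral_of_densities (δ : ℝ) (hδ : 0 < δ) (s r : ℝ)
    (hs : 0 < s) (hsr : s < r) (hr : r < 1) (b : ℝ) (hb : 0 < b) :
    b ^ (1 - δ) * (1 - r) ^ (-(δ / 2)) * Real.exp (-b ^ 2 / (2 * (1 - r))) *
      (∫ a in Set.Ioi (0 : ℝ), a * pFrom0 δ s a * pTrans δ (r - s) a b)
    = SigmaRS δ r s b :=
  sigma_eq_integral_of_densities_general δ (by linarith) s r hs hsr hr b hb
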